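/- Let (G, β) be a smallest counterexample, that is, a flow-critical ℤ₃-bordered graph with 3|V(G)| − |E(G)| < 5 such that every flow-critical ℤ₃-bordered graph (G', β') with |V(G')| < |V(G)| satisfies 3|V(G')| − |E(G')| ≥ 5. Then for every partition P of V(G) with at least two parts, 3·|P| − e(P) < 5 − 2·l(P), where e(P) denotes the number of edges of G joining two distinct parts of P and l(P) denotes the number of parts of P of size at least two. -/

import Mathlib

/-!
Write `σ(H) = 3|V(H)| - |E(H)|`. For a partition `P` of `V(G)`,
`σ(G) = σ(G/P) + ∑ (σ(G[B]) - 3)` over the parts `B`, a singleton part contributing `0`. As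
`σ(G) < 5`, the claim follows once `σ(G[B]) ≥ 5` for every proper `B` with `|B| ≥ 2`
(`pairCount_bound`). This is proved by induction on `B`.

If `G[B]` is disconnected, it splits into two nonempty pieces with no edges between them, each with
`σ ≥ 3`, so `σ(G[B]) ≥ 6`. If `G[B]` is connected, some zero-sum boundary on `B` has no nowhere-zero
flow in `G[B]`: otherwise the flow on `G` with `B` contracted, which criticality provides, would
extend to `G` (`FlowCritical.exists_not_flow`). Take a coarsest partition `Q` of `B` into connected
parts for which the quotient still has no flow. Then `G[B]/Q` is flow-critical, and it has no
parallel edges, since two or more parallel edges carry any total in `ℤ₃` and could be contracted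
(`exists_critical_quotient`). It has fewer vertices than `G`, so minimality gives
`σ(G[B]/Q) ≥ 5`; the parts of `Q` are proper subsets of `B`, so by induction each contributes a
nonnegative amount to `σ(G[B]) = σ(G[B]/Q) + ∑ (σ(C) - 3)`.

Edges are counted as ordered adjacent pairs, so all numerical statements are doubled.
-/

open scoped Classical

section FlowDefs

variable {V : Type} [Fintype V] [DecidableEq V] {A : Type} [AddCommGroup A]

/-- `β` is an `A`-boundary for `G`: its values sum to zero on every connected component. -/
def IsBoundary (G : SimpleGraph V) (β : V → A) : Prop :=
  ∀ x : V, ∑ v ∈ Finset.univ.filter (fun v => G.Reachable v x), β v = 0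

/-- `(G, β)` has a nowhere-zero flow: an antisymmetric function on ordered adjacent pairs,
never zero on edges, whose out-sum at each vertex `u` is `β u`. -/
def HasNZFlow (G : SimpleGraph V) (β : V → A) : Prop :=
  ∃ f : V → V → A,
    (∀ u v, G.Adj u v → f u v = - f v u) ∧
    (∀ u v, G.Adj u v → f u v ≠ 0) ∧
    (∀ u : V, ∑ v ∈ Finset.univ.filter (fun v => G.Adj u v), f u v = β u)

/-- `(G, β)/P` has a nowhere-zero flow, where the partition `P` of `V(G)` is given as a setoid:
an antisymmetric, nowhere-zero function on the ordered adjacent pairs lying in distinct parts,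
such that for every part, the sum of the values leaving the part is the sum of `β` on it. -/
def HasNZFlowQuot (G : SimpleGraph V) (β : V → A) (P : Setoid V) : Prop :=
  ∃ f : V → V → A,
    (∀ u v, G.Adj u v → ¬ P.r u v → f u v = - f v u) ∧
    (∀ u v, G.Adj u v → ¬ P.r u v → f u v ≠ 0) ∧
    (∀ x : V,
      ∑ u ∈ Finset.univ.filter (fun u => P.r u x),
        ∑ v ∈ Finset.univ.filter (fun v => G.Adj u v ∧ ¬ P.r u v), f u v
      = ∑ v ∈ Finset.univ.filter (fun v => P.r v x), β v)

/-- The partition `P` is `G`-connected: every part induces a connected subgraph of `G`. -/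
def PartsConnected (G : SimpleGraph V) (P : Setoid V) : Prop :=
  ∀ x : V, (G.induce {v | P.r v x}).Connected

/-- `(G, β)` is a flow-critical `A`-bordered graph: `β` is an `A`-boundary, `G` is connected,
`(G, β)` has no nowhere-zero flow, but `(G, β)/P` has one for every `G`-connected partition `P`
with at least one part of size at least two. -/
def FlowCritical (G : SimpleGraph V) (β : V → A) : Prop :=
  IsBoundary G β ∧ G.Connected ∧ ¬ HasNZFlow G β ∧
  ∀ P : Setoid V, PartsConnected G P → (∃ x y : V, x ≠ y ∧ P.r x y) →
    HasNZFlowQuot G β P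

end FlowDefs

section FlowAux

/-! ### Extending flows from quotients -/

variable {V : Type} [Fintype V] [DecidableEq V]

/-- Nonzero values on at least two elements can be chosen in `ℤ₃` with any prescribed sum; a bundle
of parallel edges is therefore able to carry any total. -/
lemma exists_nonzero_sum {ι : Type} (F : Finset ι) (hF : 1 < F.card) (t : ZMod 3) :
    ∃ g : ι → ZMod 3, (∀ i, g i ≠ 0) ∧ ∑ i ∈ F, g i = t := by
  obtain ⟨x, hx, y, hy, hxy⟩ := Finset.one_lt_card.1 hF
  have key : ∀ r : ZMod 3, ∃ p q : ZMod 3, p ≠ 0 ∧ q ≠ 0 ∧ p + q = r := by decide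
  obtain ⟨p, q, hp, hq, hpq⟩ := key (t - ∑ i ∈ (F.erase x).erase y, 1)
  refine ⟨fun i => if i = x then p else if i = y then q else 1, ?_, ?_⟩
  · intro i
    dsimp only
    split_ifs <;> first | assumption | decide
  · rw [← Finset.add_sum_erase F _ hx,
      ← Finset.add_sum_erase (F.erase x) _ (Finset.mem_erase.2 ⟨hxy.symm, hy⟩)]
    have : ∑ i ∈ (F.erase x).erase y, (if i = x then p else if i = y then q else 1)
        = ∑ i ∈ (F.erase x).erase y, (1 : ZMod 3) := by
      refine Finset.sum_congr rfl fun i hi => ?_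
      simp only [Finset.mem_erase] at hi
      simp [hi.1, hi.2.1]
    rw [this]
    simp only [if_true, hxy.symm, if_false]
    rw [← add_assoc, hpq]; ring

lemma hasNZFlow_of_quot_bot {A : Type} [AddCommGroup A] {G : SimpleGraph V} {β : V → A}
    (h : HasNZFlowQuot G β ⊥) : HasNZFlow G β := by
  obtain ⟨f, h1, h2, h3⟩ := h
  have e : ∀ u v : V, (⊥ : Setoid V).r u v ↔ u = v := fun u v => Iff.rfl
  refine ⟨f, fun u v huv => h1 u v huv huv.ne, fun u v huv => h2 u v huv huv.ne, fun u => ?_⟩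
  have := h3 u
  simp only [e, Finset.filter_eq', Finset.mem_univ, if_true, Finset.sum_singleton] at this
  rw [← this]
  refine Finset.sum_congr ?_ fun _ _ => rfl
  ext v
  simp only [Finset.mem_filter, Finset.mem_univ, true_and]
  exact ⟨fun h => ⟨h, h.ne⟩, fun h => h.1⟩

omit [DecidableEq V] in
/-- A flow on `G/P'` extends to the finer quotient `G/P` as soon as the edges inside the parts of
`P'` that cross between parts of `P` admit a nowhere-zero flow for every boundary summing to zero
on each part of `P'`. -/
lemma HasNZFlowQuot.refine {A : Type} [AddCommGroup A] {G : SimpleGraph V} {β : V → A}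
    {P P' : Setoid V} (hle : P ≤ P') (h : HasNZFlowQuot G β P')
    (hext : ∀ γ : V → A, (∀ x, ∑ u ∈ Finset.univ.filter (fun u => P'.r u x), γ u = 0) →
      ∃ g : V → V → A,
        (∀ u v, G.Adj u v → P'.r u v → ¬ P.r u v → g u v = - g v u) ∧
        (∀ u v, G.Adj u v → P'.r u v → ¬ P.r u v → g u v ≠ 0) ∧
        ∀ x, ∑ u ∈ Finset.univ.filter (fun u => P.r u x),
          ∑ v ∈ Finset.univ.filter (fun v => G.Adj u v ∧ P'.r u v ∧ ¬ P.r u v), g u v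
          = ∑ u ∈ Finset.univ.filter (fun u => P.r u x), γ u) :
    HasNZFlowQuot G β P := by
  obtain ⟨f, f1, f2, f3⟩ := h
  obtain ⟨g, g1, g2, g3⟩ := hext
    (fun u => β u - ∑ v ∈ Finset.univ.filter (fun v => G.Adj u v ∧ ¬ P'.r u v), f u v) (by
      intro x
      rw [Finset.sum_sub_distrib, f3, sub_self])
  refine ⟨fun u v => if P'.r u v then g u v else f u v, ?_, ?_, ?_⟩
  · intro u v huv hP
    dsimp only
    by_cases h : P'.r u v
    · rw [if_pos h, if_pos (P'.symm' h), g1 u v huv h hP]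
    · rw [if_neg h, if_neg (fun h' => h (P'.symm' h')), f1 u v huv h]
  · intro u v huv hP
    dsimp only
    by_cases h : P'.r u v
    · rw [if_pos h]; exact g2 u v huv h hP
    · rw [if_neg h]; exact f2 u v huv h
  · intro x
    have key : ∀ u, ∑ v ∈ Finset.univ.filter (fun v => G.Adj u v ∧ ¬ P.r u v),
          (if P'.r u v then g u v else f u v)
        = ∑ v ∈ Finset.univ.filter (fun v => G.Adj u v ∧ P'.r u v ∧ ¬ P.r u v), g u v
          + ∑ v ∈ Finset.univ.filter (fun v => G.Adj u v ∧ ¬ P'.r u v), f u v := by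
      intro u
      simp only [Finset.sum_filter, ← Finset.sum_add_distrib]
      refine Finset.sum_congr rfl fun v _ => ?_
      have : P.r u v → P'.r u v := fun h => hle h
      by_cases h1 : G.Adj u v <;> by_cases h2 : P'.r u v <;> by_cases h3 : P.r u v <;>
        simp_all
    simp only [key]
    rw [Finset.sum_add_distrib, g3, ← Finset.sum_add_distrib]
    refine Finset.sum_congr rfl fun v _ => ?_
    simp

/-- The setoid whose only possibly nontrivial class is `S`. -/
def clump (S : Set V) : Setoid V where
  r u v := u = v ∨ (u ∈ S ∧ v ∈ S)
  iseqv := ⟨fun _ => Or.inl rfl, by rintro u v (h | h); exacts [Or.inl h.symm, Or.inr h.symm], by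
    rintro u v w (rfl | h) (rfl | h') <;> tauto⟩

omit [Fintype V] [DecidableEq V] in
lemma clump_r (S : Set V) (u v : V) : (clump S).r u v ↔ u = v ∨ (u ∈ S ∧ v ∈ S) := Iff.rfl

omit [Fintype V] [DecidableEq V] in
lemma connected_induce_singleton (G : SimpleGraph V) (x : V) {S : Set V} (h : S = {x}) :
    (G.induce S).Connected := by
  subst h
  have : Nonempty ({x} : Set V) := ⟨⟨x, rfl⟩⟩
  refine ⟨?_⟩
  rintro ⟨u, rfl⟩ ⟨v, rfl⟩
  exact SimpleGraph.Reachable.refl _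

omit [Fintype V] [DecidableEq V] in
lemma partsConnected_clump {G : SimpleGraph V} {S : Set V} (hS : (G.induce S).Connected) :
    PartsConnected G (clump S) := by
  intro x
  by_cases hx : x ∈ S
  · have : {v | (clump S).r v x} = S := by
      ext v
      simp only [Set.mem_ofPred_eq, clump_r]
      constructor
      · rintro (rfl | h); exacts [hx, h.1]
      · exact fun h => Or.inr ⟨h, hx⟩
    rw [this]; exact hS
  · refine connected_induce_singleton G x ?_
    ext v
    simp [clump_r, hx]

omit [Fintype V] [DecidableEq V] in
lemma partsConnected_bot (G : SimpleGraph V) : PartsConnected G ⊥ := fun x =>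
  connected_induce_singleton G x (by ext v; exact Iff.rfl)

/-- If `G[S]` is connected with `|S| ≥ 2` and had a nowhere-zero flow for every zero-sum boundary,
then a flow on `G` with `S` contracted would extend to `G`; so some zero-sum boundary on `S` has
no flow. -/
lemma FlowCritical.exists_not_flow {A : Type} [AddCommGroup A] {G : SimpleGraph V} {β : V → A}
    (h : FlowCritical G β) (S : Finset V) (hS : 1 < S.card)
    (hconn : (G.induce (S : Set V)).Connected) :
    ∃ γ : S → A, ∑ v, γ v = 0 ∧ ¬ HasNZFlow (V := S) (G.induce (S : Set V)) γ := by
  by_contra hcon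
  push Not at hcon
  obtain ⟨-, -, hno, hcr⟩ := h
  apply hno
  apply hasNZFlow_of_quot_bot
  obtain ⟨x, hx, y, hy, hxy⟩ := Finset.one_lt_card.1 hS
  refine (hcr (clump S) (partsConnected_clump hconn) ⟨x, y, hxy, Or.inr ⟨hx, hy⟩⟩).refine
    bot_le ?_
  intro γ hγ
  have hγS : ∑ v : S, γ v = 0 := by
    rw [← hγ x, Finset.sum_coe_sort S γ]
    refine Finset.sum_congr ?_ fun _ _ => rfl
    ext v
    simp only [Finset.mem_filter, Finset.mem_univ, true_and, clump_r]
    constructor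
    · exact fun h => Or.inr ⟨h, hx⟩
    · rintro (rfl | h); exacts [hx, h.1]
  obtain ⟨f, f1, f2, f3⟩ := hcon (fun v => γ v) hγS
  have e : ∀ u v : V, (⊥ : Setoid V).r u v ↔ u = v := fun u v => Iff.rfl
  refine ⟨fun u v => if h : u ∈ S ∧ v ∈ S then f ⟨u, h.1⟩ ⟨v, h.2⟩ else 0, ?_, ?_, ?_⟩
  · rintro u v huv (rfl | ⟨hu, hv⟩) hne
    · exact absurd rfl huv.ne
    · simp only [Finset.mem_coe] at hu hv
      simp only [hu, hv, and_self, dif_pos]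
      exact f1 ⟨u, hu⟩ ⟨v, hv⟩ huv
  · rintro u v huv (rfl | ⟨hu, hv⟩) hne
    · exact absurd rfl huv.ne
    · simp only [Finset.mem_coe] at hu hv
      simp only [hu, hv, and_self, dif_pos]
      exact f2 ⟨u, hu⟩ ⟨v, hv⟩ huv
  · intro z
    simp only [e, Finset.filter_eq', Finset.mem_univ, if_true, Finset.sum_singleton]
    by_cases hz : z ∈ S
    · refine Eq.trans ?_ (f3 ⟨z, hz⟩)
      rw [Finset.sum_filter, Finset.sum_filter,
        ← Finset.sum_subset (Finset.subset_univ S), ← Finset.sum_coe_sort S]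
      · refine Finset.sum_congr rfl fun v _ => ?_
        have : (clump (S : Set V)).r z v := Or.inr ⟨hz, v.2⟩
        by_cases hadj : G.Adj z v
        · simp [hz, hadj, this, hadj.ne]
        · simp [hadj]
      · intro v _ hv
        simp [hv]
    · have h0 := hγ z
      rw [show Finset.univ.filter (fun u => (clump (S : Set V)).r u z) = {z} by
        ext u; simp [clump_r, hz], Finset.sum_singleton] at h0
      rw [h0]
      refine Finset.sum_eq_zero fun v _ => ?_
      simp [hz]

/-! ### Quotient graphs -/

/-- The simple graph underlying `G/Q`: parallel edges are identified. -/
def quotGraph (G : SimpleGraph V) (Q : Setoid V) : SimpleGraph (Quotient Q) where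
  Adj a b := a ≠ b ∧ ∃ u v, Quotient.mk Q u = a ∧ Quotient.mk Q v = b ∧ G.Adj u v
  symm := ⟨by rintro a b ⟨h, u, v, hu, hv, huv⟩; exact ⟨h.symm, v, u, hv, hu, huv.symm⟩⟩
  loopless := ⟨fun a h => h.1 rfl⟩

/-- The boundary induced on `G/Q`, summing `β` over each class. -/
noncomputable def quotBoundary {A : Type} [AddCommGroup A] (β : V → A) (Q : Setoid V) :
    Quotient Q → A :=
  fun a => ∑ u ∈ Finset.univ.filter (fun u => Quotient.mk Q u = a), β u

/-- `G/Q` has no parallel edges: at most one edge of `G` joins any two distinct classes of `Q`. -/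
def QuotSimple (G : SimpleGraph V) (Q : Setoid V) : Prop :=
  ∀ u v u' v', G.Adj u v → G.Adj u' v' → Quotient.mk Q u = Quotient.mk Q u' →
    Quotient.mk Q v = Quotient.mk Q v' → Quotient.mk Q u ≠ Quotient.mk Q v → u = u' ∧ v = v'

omit [DecidableEq V] in
lemma sum_fiber {A K : Type} [AddCommMonoid A] [Fintype K] [DecidableEq K] (k : V → K) (F : V → A) :
    ∑ a, ∑ u ∈ Finset.univ.filter (fun u => k u = a), F u = ∑ u, F u := by
  simp only [Finset.sum_filter]
  rw [Finset.sum_comm]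
  simp

omit [DecidableEq V] in
lemma sum_fiber₂ {A K : Type} [AddCommMonoid A] [Fintype K] [DecidableEq K] (k : V → K) (F : V → V → A) :
    ∑ a, ∑ b, ∑ u ∈ Finset.univ.filter (fun u => k u = a),
      ∑ v ∈ Finset.univ.filter (fun v => k v = b), F u v = ∑ u, ∑ v, F u v := by
  rw [← sum_fiber k]
  refine Finset.sum_congr rfl fun a _ => ?_
  rw [Finset.sum_comm]
  refine Finset.sum_congr rfl fun u _ => ?_
  exact sum_fiber k (F u)

omit [DecidableEq V] in
/-- When `G/Q` is simple, a sum over the edges between two adjacent classes has one term. -/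
lemma sum_between {A : Type} [AddCommMonoid A] {G : SimpleGraph V} {Q : Setoid V}
    (hs : QuotSimple G Q) (F : V → V → A) {u v : V} (huv : G.Adj u v)
    (hne : Quotient.mk Q u ≠ Quotient.mk Q v) :
    ∑ u' ∈ Finset.univ.filter (fun u' => Quotient.mk Q u' = Quotient.mk Q u),
      ∑ v' ∈ Finset.univ.filter (fun v' => Quotient.mk Q v' = Quotient.mk Q v),
        (if G.Adj u' v' then F u' v' else 0) = F u v := by
  rw [Finset.sum_eq_single u, Finset.sum_eq_single v]
  · rw [if_pos huv]
  · intro v' hv' hne'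
    simp only [Finset.mem_filter, Finset.mem_univ, true_and] at hv'
    rw [if_neg]
    intro h
    exact hne' (hs u v u v' huv h rfl hv'.symm hne).2.symm
  · simp
  · intro u' hu' hne'
    refine Finset.sum_eq_zero fun v' hv' => ?_
    simp only [Finset.mem_filter, Finset.mem_univ, true_and] at hv' hu'
    rw [if_neg]
    intro h
    exact hne' (hs u v u' v' huv h hu'.symm hv'.symm hne).1.symm
  · simp

omit [DecidableEq V] in
/-- A flow on the simple graph `G/Q` is a flow on the quotient in the sense of `HasNZFlowQuot`. -/
lemma HasNZFlow.pullback {A : Type} [AddCommGroup A] {G : SimpleGraph V} {β : V → A}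
    {Q : Setoid V} (hs : QuotSimple G Q)
    (h : HasNZFlow (quotGraph G Q) (quotBoundary β Q)) : HasNZFlowQuot G β Q := by
  obtain ⟨f, f1, f2, f3⟩ := h
  have e : ∀ u v : V, Q.r u v ↔ Quotient.mk Q u = Quotient.mk Q v :=
    fun u v => (Quotient.eq (r := Q)).symm
  have hadj : ∀ u v, G.Adj u v → Quotient.mk Q u ≠ Quotient.mk Q v →
      (quotGraph G Q).Adj (Quotient.mk Q u) (Quotient.mk Q v) :=
    fun u v huv hne => ⟨hne, u, v, rfl, rfl, huv⟩
  simp only [HasNZFlowQuot, e]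
  refine ⟨fun u v => f (Quotient.mk Q u) (Quotient.mk Q v),
    fun u v huv hne => f1 _ _ (hadj u v huv hne), fun u v huv hne => f2 _ _ (hadj u v huv hne), ?_⟩
  intro x
  have h3 := f3 (Quotient.mk Q x)
  rw [quotBoundary] at h3
  rw [← h3, Finset.sum_filter]
  have : ∀ u, ∑ v ∈ Finset.univ.filter
      (fun v => G.Adj u v ∧ ¬ Quotient.mk Q u = Quotient.mk Q v),
        f (Quotient.mk Q u) (Quotient.mk Q v)
      = ∑ b, ∑ v ∈ Finset.univ.filter (fun v => Quotient.mk Q v = b),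
        (if G.Adj u v ∧ ¬ Quotient.mk Q u = Quotient.mk Q v then
          f (Quotient.mk Q u) (Quotient.mk Q v) else 0) := by
    intro u
    rw [sum_fiber, Finset.sum_filter]
  simp only [this]
  rw [← Finset.sum_filter, Finset.sum_comm]
  rw [Finset.sum_filter]
  refine Finset.sum_congr rfl fun b _ => ?_
  by_cases hb : (quotGraph G Q).Adj (Quotient.mk Q x) b
  · rw [if_pos hb]
    obtain ⟨hne, u, v, hu, rfl, huv⟩ := hb
    rw [← hu] at hne ⊢
    rw [← sum_between hs (fun u' v' => f (Quotient.mk Q u) (Quotient.mk Q v)) huv hne]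
    refine Finset.sum_congr rfl fun u' hu' => Finset.sum_congr rfl fun v' hv' => ?_
    simp only [Finset.mem_filter, Finset.mem_univ, true_and] at hu' hv'
    simp only [hu', hv', hne, not_false_eq_true, and_true]
  · rw [if_neg hb]
    refine Finset.sum_eq_zero fun u' hu' => Finset.sum_eq_zero fun v' hv' => ?_
    simp only [Finset.mem_filter, Finset.mem_univ, true_and] at hu' hv'
    rw [if_neg]
    rintro ⟨h, hne⟩
    exact hb ⟨by rw [← hu', ← hv']; exact hne, u', v', hu', hv', h⟩

omit [DecidableEq V] in
/-- Contracting `G` along the preimage of `R` is contracting `G/Q` along `R`, so flows transfer. -/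
lemma HasNZFlowQuot.pushforward {A : Type} [AddCommGroup A] {G : SimpleGraph V} {β : V → A}
    {Q : Setoid V} (hs : QuotSimple G Q) {R : Setoid (Quotient Q)}
    (h : HasNZFlowQuot G β (R.comap (Quotient.mk Q))) :
    HasNZFlowQuot (quotGraph G Q) (quotBoundary β Q) R := by
  obtain ⟨f, f1, f2, f3⟩ := h
  have e : ∀ u v : V, (R.comap (Quotient.mk Q)).r u v ↔
    R.r (Quotient.mk Q u) (Quotient.mk Q v) := fun u v => Iff.rfl
  simp only [e] at f1 f2 f3
  refine ⟨fun a b => ∑ u ∈ Finset.univ.filter (fun u => Quotient.mk Q u = a),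
    ∑ v ∈ Finset.univ.filter (fun v => Quotient.mk Q v = b), if G.Adj u v then f u v else 0,
    ?_, ?_, ?_⟩
  · rintro _ _ ⟨hne, u, v, rfl, rfl, huv⟩ hR
    dsimp only
    rw [sum_between hs f huv hne, sum_between hs f huv.symm hne.symm]
    exact f1 u v huv hR
  · rintro _ _ ⟨hne, u, v, rfl, rfl, huv⟩ hR
    dsimp only
    rw [sum_between hs f huv hne]
    exact f2 u v huv hR
  · intro x
    obtain ⟨x, rfl⟩ := Quotient.exists_rep x
    have hr : ∑ a ∈ Finset.univ.filter (fun a => R.r a (Quotient.mk Q x)), quotBoundary β Q a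
        = ∑ v ∈ Finset.univ.filter (fun v => R.r (Quotient.mk Q v) (Quotient.mk Q x)), β v := by
      rw [Finset.sum_filter, Finset.sum_filter, ← sum_fiber (Quotient.mk Q)]
      refine Finset.sum_congr rfl fun a _ => ?_
      rw [quotBoundary]
      split_ifs with ha
      · refine Finset.sum_congr rfl fun u hu => ?_
        rw [(Finset.mem_filter.1 hu).2, if_pos ha]
      · refine (Finset.sum_eq_zero fun u hu => ?_).symm
        rw [(Finset.mem_filter.1 hu).2, if_neg ha]
    rw [hr, ← f3 x]
    simp only [Finset.sum_filter (s := (Finset.univ : Finset V)) (p := fun v => G.Adj _ v ∧ _)]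
    rw [Finset.sum_filter, Finset.sum_filter]
    trans ∑ u, ∑ v, (if R.r (Quotient.mk Q u) (Quotient.mk Q x) ∧ G.Adj u v ∧
      ¬ R.r (Quotient.mk Q u) (Quotient.mk Q v) then f u v else 0)
    · rw [← sum_fiber₂ (Quotient.mk Q)]
      refine Finset.sum_congr rfl fun a _ => ?_
      by_cases ha : R.r a (Quotient.mk Q x)
      · rw [if_pos ha, Finset.sum_filter]
        refine Finset.sum_congr rfl fun b _ => ?_
        by_cases hb : (quotGraph G Q).Adj a b ∧ ¬ R.r a b
        · rw [if_pos hb]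
          refine Finset.sum_congr rfl fun u hu => Finset.sum_congr rfl fun v hv => ?_
          rw [(Finset.mem_filter.1 hu).2, (Finset.mem_filter.1 hv).2]
          simp [ha, hb.2]
        · rw [if_neg hb]
          refine (Finset.sum_eq_zero fun u hu => Finset.sum_eq_zero fun v hv => ?_).symm
          have hu := (Finset.mem_filter.1 hu).2
          have hv := (Finset.mem_filter.1 hv).2
          rw [if_neg]
          rintro ⟨-, h, hR⟩
          rw [hu, hv] at hR
          exact hb ⟨⟨fun hab => hR (hab ▸ R.refl' a), u, v, hu, hv, h⟩, hR⟩
      · rw [if_neg ha]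
        refine (Finset.sum_eq_zero fun b _ => Finset.sum_eq_zero fun u hu =>
          Finset.sum_eq_zero fun v hv => ?_).symm
        rw [(Finset.mem_filter.1 hu).2]
        simp [ha]
    · refine Finset.sum_congr rfl fun u _ => ?_
      by_cases hu : R.r (Quotient.mk Q u) (Quotient.mk Q x) <;> simp [hu]

omit [Fintype V] [DecidableEq V] in
/-- Connected parts of `G/Q` pull back to connected parts of `G` when the parts of `Q` are
connected: each step of a walk in `G/Q` lifts to an edge, and classes link consecutive edges. -/
lemma PartsConnected.comap {G : SimpleGraph V} {Q : Setoid V} (hQ : PartsConnected G Q)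
    {R : Setoid (Quotient Q)} (hR : PartsConnected (quotGraph G Q) R) :
    PartsConnected G (R.comap (Quotient.mk Q)) := by
  intro x
  set S : Set V := {v | (R.comap (Quotient.mk Q)).r v x} with hS
  set T : Set (Quotient Q) := {a | R.r a (Quotient.mk Q x)} with hT
  have hST : ∀ v, v ∈ S ↔ Quotient.mk Q v ∈ T := fun v => Iff.rfl
  have : Nonempty S := ⟨⟨x, R.refl' _⟩⟩
  refine ⟨?_⟩
  -- vertices of a common `Q`-class are joined inside that class
  have same : ∀ (u v : S), Quotient.mk Q u.1 = Quotient.mk Q v.1 →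
      (G.induce S).Reachable u v := by
    rintro ⟨u, hu⟩ ⟨v, hv⟩ huv
    have hsub : {w | Q.r w v} ⊆ S := by
      intro w hw
      rw [hST, show Quotient.mk Q w = Quotient.mk Q v from Quotient.sound hw]
      exact (hST v).1 hv
    have := (hQ v).preconnected ⟨u, Quotient.exact huv⟩ ⟨v, Q.refl' v⟩
    exact this.map (SimpleGraph.induceHomOfLE G hsub).toHom
  have lift : ∀ a b : T, (( quotGraph G Q).induce T).Reachable a b →
      ∀ u v : S, Quotient.mk Q u.1 = a.1 → Quotient.mk Q v.1 = b.1 →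
        (G.induce S).Reachable u v := by
    rintro a b ⟨p⟩
    induction p with
    | nil => intro u v hu hv; exact same u v (hu.trans hv.symm)
    | @cons a c b hac p ih =>
      intro u v hu hv
      obtain ⟨-, u', c', hu', hc', hadj⟩ := hac
      have hu'S : u' ∈ S := by rw [hST, hu']; exact a.2
      have hc'S : c' ∈ S := by rw [hST, hc']; exact c.2
      have h1 := same u ⟨u', hu'S⟩ (hu.trans hu'.symm)
      have h2 : (G.induce S).Adj ⟨u', hu'S⟩ ⟨c', hc'S⟩ := hadj
      exact h1.trans (h2.reachable.trans (ih ⟨c', hc'S⟩ v hc' hv))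
  intro u v
  exact lift ⟨_, (hST u).1 u.2⟩ ⟨_, (hST v).1 v.2⟩ ((hR (Quotient.mk Q x)).preconnected _ _)
    u v rfl rfl

/-! ### Flow-critical quotients -/

/-- On a single vertex the boundary condition forces `β = 0`, and the empty flow works. -/
lemma FlowCritical.nontrivial {A : Type} [AddCommGroup A] {G : SimpleGraph V} {β : V → A}
    (h : FlowCritical G β) : Nontrivial V := by
  by_contra hV
  rw [not_nontrivial_iff_subsingleton] at hV
  have hadj : ∀ u v, ¬ G.Adj u v := fun u v huv => huv.ne (Subsingleton.elim _ _)
  refine h.2.2.1 ⟨0, fun u v huv => absurd huv (hadj u v), fun u v huv => absurd huv (hadj u v),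
    fun u => ?_⟩
  have := h.1 u
  rw [show Finset.univ.filter (fun v => G.Reachable v u) = {u} by
    ext v; simp [Subsingleton.elim v u], Finset.sum_singleton] at this
  simp [this]

/-- A connected graph without a nowhere-zero `ℤ₃`-flow contracts to a simple flow-critical graph:
contract along a coarsest partition into connected parts whose quotient still has no flow. If two
parts `a`, `b` were joined by two or more edges, merging them would give a quotient with a flow,
and the edges between `a` and `b` can carry any prescribed total from `a` to `b`, so that flow
would extend. -/
lemma exists_critical_quotient {G : SimpleGraph V} {β : V → ZMod 3} (hconn : G.Connected)
    (hsum : ∑ v, β v = 0) (hno : ¬ HasNZFlow G β) :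
    ∃ Q : Setoid V, QuotSimple G Q ∧ FlowCritical (quotGraph G Q) (quotBoundary β Q) := by
  have : Finite (Setoid V) :=
    Finite.of_injective (fun Q : Setoid V => fun u v => Q.r u v) (fun Q Q' h => by
      ext u v; exact iff_of_eq (congrFun (congrFun h u) v))
  obtain ⟨Q, ⟨hQc, hQno⟩, hmax⟩ := Set.Finite.exists_maximal
    (Set.toFinite {Q : Setoid V | PartsConnected G Q ∧ ¬ HasNZFlowQuot G β Q})
    ⟨⊥, partsConnected_bot G, fun h => hno (hasNZFlow_of_quot_bot h)⟩
  have hcoarse : ∀ R : Setoid (Quotient Q), PartsConnected (quotGraph G Q) R →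
      (∃ a b, a ≠ b ∧ R.r a b) → HasNZFlowQuot G β (R.comap (Quotient.mk Q)) := by
    rintro R hR ⟨a, b, hab, hRab⟩
    by_contra hcon
    have hle : Q ≤ R.comap (Quotient.mk Q) := by
      intro u v huv
      change R.r _ _
      rw [Quotient.sound huv]
    have := hmax ⟨hQc.comap hR, hcon⟩ hle
    induction a using Quotient.ind
    induction b using Quotient.ind
    exact hab (Quotient.sound (this hRab))
  have hs : QuotSimple G Q := by
    intro u v u' v' huv huv' hu hv hne
    by_contra hdiff
    apply hQno
    set a := Quotient.mk Q u with ha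
    set b := Quotient.mk Q v with hb
    have hab : (quotGraph G Q).Adj a b := ⟨hne, u, v, rfl, rfl, huv⟩
    have hle : Q ≤ (clump {a, b}).comap (Quotient.mk Q) := by
      intro u v huv
      exact Or.inl (Quotient.sound huv)
    refine (hcoarse (clump {a, b}) (partsConnected_clump
      (SimpleGraph.induce_pair_connected_of_adj hab)) ⟨a, b, hne, Or.inr (by simp)⟩).refine hle ?_
    intro γ hγ
    have e : ∀ u v : V, Q.r u v ↔ Quotient.mk Q u = Quotient.mk Q v :=
      fun u v => (Quotient.eq (r := Q)).symm
    have e' : ∀ u v : V, ((clump {a, b}).comap (Quotient.mk Q)).r u v ↔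
        Quotient.mk Q u = Quotient.mk Q v ∨ ((Quotient.mk Q u = a ∨ Quotient.mk Q u = b) ∧
          (Quotient.mk Q v = a ∨ Quotient.mk Q v = b)) := fun u v => Iff.rfl
    simp only [e, e'] at hγ ⊢
    -- the edges between the two classes
    set F : Finset (V × V) := Finset.univ.filter
      (fun p => Quotient.mk Q p.1 = a ∧ Quotient.mk Q p.2 = b ∧ G.Adj p.1 p.2) with hF
    have hFcard : 1 < F.card := by
      rw [Finset.one_lt_card]
      refine ⟨(u, v), by simp [hF, huv, ha, hb], (u', v'), by simp [hF, huv', ← hu, ← hv], ?_⟩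
      intro h
      rw [Prod.mk.injEq] at h
      exact hdiff h
    obtain ⟨g, hg0, hgsum⟩ := exists_nonzero_sum F hFcard
      (∑ w ∈ Finset.univ.filter (fun w => Quotient.mk Q w = a), γ w)
    have hγab : ∑ w ∈ Finset.univ.filter (fun w => Quotient.mk Q w = a), γ w
        + ∑ w ∈ Finset.univ.filter (fun w => Quotient.mk Q w = b), γ w = 0 := by
      rw [← hγ u, Finset.sum_filter, Finset.sum_filter, Finset.sum_filter,
        ← Finset.sum_add_distrib]
      refine Finset.sum_congr rfl fun w _ => ?_
      rw [← ha]
      by_cases h1 : Quotient.mk Q w = a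
      · simp [h1, hne]
      · by_cases h2 : Quotient.mk Q w = b <;> simp [h1, h2, hne.symm]
    -- `F` carries exactly the surplus of `a` over to `b`
    have hgsum' : ∑ w, ∑ z, (if Quotient.mk Q w = a ∧ Quotient.mk Q z = b ∧ G.Adj w z then
        g (w, z) else 0) = ∑ w ∈ Finset.univ.filter (fun w => Quotient.mk Q w = a), γ w := by
      rw [← hgsum, hF, Finset.sum_filter, ← Finset.univ_product_univ, Finset.sum_product]
    refine ⟨fun w z => if Quotient.mk Q w = a then g (w, z) else - g (z, w), ?_, ?_, ?_⟩
    · intro w z hwz hor hnot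
      have hcases : (Quotient.mk Q w = a ∧ Quotient.mk Q z = b) ∨
          (Quotient.mk Q w = b ∧ Quotient.mk Q z = a) := by
        rcases hor with h | ⟨h1 | h1, h2 | h2⟩
        · exact absurd h hnot
        · exact absurd (h1.trans h2.symm) hnot
        · exact Or.inl ⟨h1, h2⟩
        · exact Or.inr ⟨h1, h2⟩
        · exact absurd (h1.trans h2.symm) hnot
      rcases hcases with ⟨h1, h2⟩ | ⟨h1, h2⟩ <;> simp [h1, h2, hne.symm]
    · intro w z _ _ _
      dsimp only
      split_ifs
      · exact hg0 _
      · exact neg_ne_zero.2 (hg0 _)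
    · intro x
      rw [Finset.sum_filter]
      simp only [Finset.sum_filter (s := (Finset.univ : Finset V)) (p := fun v => G.Adj _ v ∧ _)]
      by_cases hxa : Quotient.mk Q x = a
      · rw [hxa, ← hgsum']
        refine Finset.sum_congr rfl fun w _ => ?_
        by_cases hw : Quotient.mk Q w = a
        · rw [if_pos hw]
          refine Finset.sum_congr rfl fun z _ => ?_
          simp only [hw, true_and, true_or, if_true]
          refine if_congr ?_ rfl rfl
          constructor
          · rintro ⟨h, h1 | h1 | h1, h2⟩
            · exact absurd h1 h2
            · exact absurd h1.symm h2
            · exact ⟨h1, h⟩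
          · rintro ⟨h1, h⟩
            exact ⟨h, Or.inr (Or.inr h1), by rw [h1]; exact hne⟩
        · simp [hw]
      · by_cases hxb : Quotient.mk Q x = b
        · rw [hxb, ← neg_eq_of_add_eq_zero_right hγab, ← hgsum', Finset.sum_comm,
            ← Finset.sum_neg_distrib]
          refine Finset.sum_congr rfl fun w _ => ?_
          by_cases hw : Quotient.mk Q w = b
          · rw [if_pos hw, ← Finset.sum_neg_distrib]
            refine Finset.sum_congr rfl fun z _ => ?_
            simp only [hw, hne.symm, if_false, true_and, or_true]
            rw [← neg_zero, ← apply_ite Neg.neg, neg_zero]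
            refine congrArg _ (if_congr ?_ rfl rfl)
            constructor
            · rintro ⟨h, h1 | h1 | h1, h2⟩
              · exact absurd h1 h2
              · exact ⟨h1, h.symm⟩
              · exact absurd h1.symm h2
            · rintro ⟨h1, h⟩
              exact ⟨h.symm, Or.inr (Or.inl h1), by rw [h1]; exact hne.symm⟩
          · simp [hw]
        · rw [show Finset.univ.filter (fun w => Quotient.mk Q w = Quotient.mk Q x)
              = Finset.univ.filter (fun w => Quotient.mk Q w = Quotient.mk Q x ∨
                ((Quotient.mk Q w = a ∨ Quotient.mk Q w = b) ∧
                  (Quotient.mk Q x = a ∨ Quotient.mk Q x = b))) by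
              ext w; simp [hxa, hxb], hγ x]
          refine Finset.sum_eq_zero fun w _ => ?_
          by_cases hw : Quotient.mk Q w = Quotient.mk Q x
          · rw [if_pos hw]
            refine Finset.sum_eq_zero fun z _ => if_neg ?_
            rw [hw]
            rintro ⟨-, h | ⟨h | h, -⟩, h2⟩
            · exact h2 h
            · exact hxa h
            · exact hxb h
          · exact if_neg hw
  have hQconn : (quotGraph G Q).Connected := by
    have : Nonempty (Quotient Q) := hconn.nonempty.map (Quotient.mk Q)
    refine ⟨fun a b => ?_⟩
    induction a using Quotient.ind with | _ u
    induction b using Quotient.ind with | _ v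
    obtain ⟨p⟩ := hconn.preconnected u v
    induction p with
    | nil => exact SimpleGraph.Reachable.refl _
    | @cons x y z hxy _ ih =>
      by_cases h : Quotient.mk Q x = Quotient.mk Q y
      · rw [h]; exact ih
      · exact SimpleGraph.Reachable.trans
          (SimpleGraph.Adj.reachable (G := quotGraph G Q) ⟨h, x, y, rfl, rfl, hxy⟩) ih
  refine ⟨Q, hs, ?_, hQconn, fun h => hQno (h.pullback hs),
    fun R hR hR' => (hcoarse R hR hR').pushforward hs⟩
  intro x
  rw [Finset.filter_true_of_mem fun v _ => hQconn.preconnected v x]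
  simp only [quotBoundary]
  rw [sum_fiber, hsum]

/-! ### Counting edges -/

/-- The number of ordered adjacent pairs inside `S`, that is, twice the number of edges of the
subgraph induced by `S`. -/
noncomputable def pairCount (G : SimpleGraph V) (S : Finset V) : ℕ :=
  ∑ u ∈ S, ∑ v ∈ S, if G.Adj u v then 1 else 0

omit [DecidableEq V] in
lemma pairCount_univ (G : SimpleGraph V) :
    pairCount G Finset.univ = ∑ u, ∑ v, if G.Adj u v then 1 else 0 := rfl

omit [DecidableEq V] in
lemma two_mul_card_edgeSet (G : SimpleGraph V) :
    2 * Nat.card G.edgeSet = ∑ u, ∑ v, if G.Adj u v then 1 else 0 := by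
  rw [Nat.card_eq_fintype_card, ← SimpleGraph.edgeFinset_card,
    ← SimpleGraph.sum_degrees_eq_twice_card_edges]
  refine Finset.sum_congr rfl fun u _ => ?_
  rw [← Finset.sum_filter, Finset.sum_const, smul_eq_mul, mul_one,
    ← SimpleGraph.card_neighborFinset_eq_degree]
  congr 1
  ext v
  simp

omit [DecidableEq V] in
/-- Ordered adjacent pairs are counted by whether they cross between classes of `Q` or lie inside
one of them. -/
lemma pairs_split (G : SimpleGraph V) (Q : Setoid V) :
    ∑ u, ∑ v, (if G.Adj u v then 1 else 0)
      = ∑ u, ∑ v, (if G.Adj u v ∧ Quotient.mk Q u ≠ Quotient.mk Q v then 1 else 0)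
        + ∑ c, pairCount G (Finset.univ.filter (fun u => Quotient.mk Q u = c)) := by
  have : ∑ c, pairCount G (Finset.univ.filter (fun u => Quotient.mk Q u = c))
      = ∑ u, ∑ v, (if G.Adj u v ∧ Quotient.mk Q u = Quotient.mk Q v then 1 else 0) := by
    rw [← sum_fiber (Quotient.mk Q)]
    refine Finset.sum_congr rfl fun c _ => ?_
    rw [pairCount]
    refine Finset.sum_congr rfl fun u hu => ?_
    rw [Finset.sum_filter]
    refine Finset.sum_congr rfl fun v _ => ?_
    rw [(Finset.mem_filter.1 hu).2]
    by_cases h1 : G.Adj u v <;> by_cases h2 : Quotient.mk Q v = c <;> 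
      simp [h1, h2, eq_comm (a := c)]
  rw [this, ← Finset.sum_add_distrib]
  refine Finset.sum_congr rfl fun u _ => ?_
  rw [← Finset.sum_add_distrib]
  refine Finset.sum_congr rfl fun v _ => ?_
  by_cases h1 : G.Adj u v <;> by_cases h2 : Quotient.mk Q u = Quotient.mk Q v <;> simp [h1, h2]

omit [DecidableEq V] in
lemma cross_pairs {G : SimpleGraph V} {Q : Setoid V} (hs : QuotSimple G Q) :
    ∑ u, ∑ v, (if G.Adj u v ∧ Quotient.mk Q u ≠ Quotient.mk Q v then 1 else 0)
      = 2 * Nat.card (quotGraph G Q).edgeSet := by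
  rw [two_mul_card_edgeSet, ← sum_fiber₂ (Quotient.mk Q)]
  refine Finset.sum_congr rfl fun a _ => Finset.sum_congr rfl fun b _ => ?_
  by_cases hab : (quotGraph G Q).Adj a b
  · rw [if_pos hab]
    obtain ⟨hne, u, v, rfl, rfl, huv⟩ := hab
    refine Eq.trans ?_ (sum_between hs (fun _ _ => 1) huv hne)
    refine Finset.sum_congr rfl fun u' hu' => Finset.sum_congr rfl fun v' hv' => ?_
    rw [(Finset.mem_filter.1 hu').2, (Finset.mem_filter.1 hv').2]
    simp [hne]
  · rw [if_neg hab]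
    refine Finset.sum_eq_zero fun u' hu' => Finset.sum_eq_zero fun v' hv' => if_neg ?_
    have hu' := (Finset.mem_filter.1 hu').2
    have hv' := (Finset.mem_filter.1 hv').2
    rw [hu', hv']
    exact fun h => hab ⟨h.2, u', v', hu', hv', h.1⟩

omit [Fintype V] [DecidableEq V] in
lemma pairCount_singleton (G : SimpleGraph V) (x : V) : pairCount G {x} = 0 := by
  simp [pairCount]

omit [Fintype V] in
/-- Counting edges is additive when no edge joins `T` to `S \ T`. -/
lemma pairCount_split (G : SimpleGraph V) {S T : Finset V} (hT : T ⊆ S)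
    (h : ∀ u ∈ T, ∀ v ∈ S \ T, ¬ G.Adj u v) :
    pairCount G S = pairCount G T + pairCount G (S \ T) := by
  simp only [pairCount]
  rw [← Finset.sum_sdiff hT, add_comm]
  congr 1
  · refine Finset.sum_congr rfl fun u hu => ?_
    rw [← Finset.sum_sdiff hT, Finset.sum_eq_zero, zero_add]
    exact fun v hv => if_neg (h u hu v hv)
  · refine Finset.sum_congr rfl fun u hu => ?_
    rw [← Finset.sum_sdiff hT, add_eq_left]
    exact Finset.sum_eq_zero fun v hv => if_neg fun h' => h v hv u hu h'.symm

omit [Fintype V] [DecidableEq V] in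
lemma pairCount_induce (G : SimpleGraph V) (S : Finset V) (T : Finset S) :
    pairCount (V := S) (G.induce (S : Set V)) T
      = pairCount G (T.map (Function.Embedding.subtype _)) := by
  simp only [pairCount, Finset.sum_map]
  rfl

/-! ### Density of proper vertex sets in a smallest counterexample -/

/-- In a smallest counterexample every proper vertex set `S` with at least two vertices satisfies
`3|S| - e(S) ≥ 5`, stated here after doubling. -/
lemma pairCount_bound {G : SimpleGraph V} {β : V → ZMod 3} (hcrit : FlowCritical G β)
    (hmin : ∀ (V' : Type) [Fintype V'] [DecidableEq V'] (G' : SimpleGraph V')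
        (β' : V' → ZMod 3), FlowCritical G' β' → Fintype.card V' < Fintype.card V →
        (5 : ℤ) ≤ 3 * Fintype.card V' - Nat.card G'.edgeSet)
    (S : Finset V) (hS : S ≠ Finset.univ) (hS2 : 1 < S.card) :
    pairCount G S + 10 ≤ 6 * S.card := by
  induction S using Finset.strongInduction with
  | H S ih =>
  -- a proper subset has `3|T| - e(T) ≥ 3`, with equality for single vertices
  have weak : ∀ T ⊂ S, T.Nonempty → pairCount G T + 6 ≤ 6 * T.card := by
    intro T hT hne
    rcases Nat.lt_or_ge 1 T.card with h | h
    · have := ih T hT (fun h' => by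
        rw [h'] at hT; exact hT.2 (Finset.subset_univ _)) h
      omega
    · obtain ⟨x, rfl⟩ := Finset.card_eq_one.1 (le_antisymm h hne.card_pos)
      simp [pairCount_singleton]
  by_cases hconn : (G.induce (S : Set V)).Connected
  · obtain ⟨γ, hγ, hno⟩ := hcrit.exists_not_flow S hS2 hconn
    obtain ⟨Q, hs, hQ⟩ := exists_critical_quotient (V := S) hconn hγ hno
    have hcard : Fintype.card (Quotient Q) < Fintype.card V := by
      calc Fintype.card (Quotient Q) ≤ Fintype.card S := Fintype.card_quotient_le Q
        _ = S.card := Fintype.card_coe S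
        _ < _ := (Finset.card_lt_iff_ne_univ S).2 hS
    have h5 := hmin _ _ _ hQ hcard
    have hnt := hQ.nontrivial
    have htot : pairCount G S
        = pairCount (V := S) (G.induce (S : Set V)) Finset.univ := by
      rw [pairCount_induce, Finset.univ_eq_attach]
      exact congrArg _ (Finset.attach_map_val).symm
    rw [pairCount_univ, pairs_split (V := S) _ Q, cross_pairs hs] at htot
    have hcl : ∑ c : Quotient Q, (pairCount (V := S) (G.induce (S : Set V))
          (Finset.univ.filter (fun u => Quotient.mk Q u = c)) + 6)
        ≤ ∑ c : Quotient Q, 6 * (Finset.univ.filter (fun u => Quotient.mk Q u = c)).card := by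
      refine Finset.sum_le_sum fun c _ => ?_
      rw [pairCount_induce, ← Finset.card_map (Function.Embedding.subtype _)]
      apply weak
      · obtain ⟨d, hd⟩ := exists_ne c
        obtain ⟨w, rfl⟩ := Quotient.exists_rep d
        rw [Finset.ssubset_iff_of_subset]
        · refine ⟨w, w.2, ?_⟩
          simpa using hd
        · intro x hx
          obtain ⟨y, -, rfl⟩ := Finset.mem_map.1 hx
          exact y.2
      · obtain ⟨w, rfl⟩ := Quotient.exists_rep c
        exact ⟨w, by simp⟩
    have hcs : ∑ c : Quotient Q, (Finset.univ.filter (fun u => Quotient.mk Q u = c)).card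
        = S.card := by
      simp only [Finset.card_eq_sum_ones]
      rw [sum_fiber]; simp
    rw [← Finset.mul_sum, hcs, Finset.sum_add_distrib, Finset.sum_const, Finset.card_univ,
      smul_eq_mul] at hcl
    omega
  · obtain ⟨x, hx⟩ : S.Nonempty := Finset.card_pos.1 (by omega)
    have : Nonempty (S : Set V) := ⟨⟨x, hx⟩⟩
    have hnp : ¬ (G.induce (S : Set V)).Preconnected := fun h => hconn ⟨h⟩
    rw [SimpleGraph.Preconnected] at hnp
    push Not at hnp
    obtain ⟨u, v, huv⟩ := hnp
    -- one component of `S`; no edge leaves it inside `S`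
    set T : Finset V := S.filter
      (fun w => ∃ h : w ∈ S, (G.induce (S : Set V)).Reachable u ⟨w, h⟩) with hT
    have huT : u.1 ∈ T := by
      rw [hT, Finset.mem_filter]
      exact ⟨u.2, u.2, SimpleGraph.Reachable.refl _⟩
    have hvT : v.1 ∉ T := by
      rw [hT, Finset.mem_filter]
      rintro ⟨-, h, h'⟩
      exact huv h'
    have hTS : T ⊆ S := Finset.filter_subset _ _
    have hno : ∀ w ∈ T, ∀ z ∈ S \ T, ¬ G.Adj w z := by
      intro w hw z hz hwz
      rw [Finset.mem_sdiff] at hz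
      obtain ⟨hwS, hwS', hreach⟩ := Finset.mem_filter.1 hw
      apply hz.2
      rw [hT, Finset.mem_filter]
      refine ⟨hz.1, hz.1, hreach.trans (SimpleGraph.Adj.reachable ?_)⟩
      exact hwz
    have h1 := weak T ((Finset.ssubset_iff_of_subset hTS).2 ⟨v, v.2, hvT⟩) ⟨u, huT⟩
    have h2 := weak (S \ T) ((Finset.ssubset_iff_of_subset Finset.sdiff_subset).2
      ⟨u, u.2, fun h => (Finset.mem_sdiff.1 h).2 huT⟩) ⟨v, Finset.mem_sdiff.2 ⟨v.2, hvT⟩⟩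
    have h3 := Finset.card_sdiff_add_card_eq_card hTS
    rw [pairCount_split G hTS hno]
    omega

end FlowAux

/-- If `(G, β)` is a smallest counterexample (flow-critical over `ℤ₃` with `3|V| − |E| < 5`,
vertex-minimal among such), then every partition `P` of `V(G)` with at least two parts
satisfies `3|P| − e(P) < 5 − 2 l(P)`, where `e(P)` is the number of edges joining distinct
parts and `l(P)` the number of parts of size at least two. -/
theorem smallest_counterexample_partition_bound (V : Type) [Fintype V] [DecidableEq V]
    (G : SimpleGraph V) (β : V → ZMod 3)
    (hcrit : FlowCritical G β)
    (hsmall : (3 * Fintype.card V - Nat.card G.edgeSet : ℤ) < 5)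
    (hmin : ∀ (V' : Type) [Fintype V'] [DecidableEq V'] (G' : SimpleGraph V')
        (β' : V' → ZMod 3), FlowCritical G' β' → Fintype.card V' < Fintype.card V →
        (5 : ℤ) ≤ 3 * Fintype.card V' - Nat.card G'.edgeSet)
    (P : Setoid V) (hP : ∃ u v : V, ¬ P.r u v) :
    (3 * Fintype.card (Quotient P) : ℤ)
        - (G.edgeFinset.filter (fun e => ∃ u v : V, e = s(u, v) ∧ ¬ P.r u v)).card
      < 5 - 2 * (Finset.univ.filter (fun c : Quotient P =>
          ∃ u v : V, u ≠ v ∧ Quotient.mk P u = c ∧ Quotient.mk P v = c)).card := by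

  have hb := fun c : Quotient P => pairCount_bound hcrit hmin
    (Finset.univ.filter (fun u => Quotient.mk P u = c))
  -- singleton parts give `3 - 3 = 0`, the others at least `5 - 3 = 2` (both doubled)
  have hcl : ∑ c : Quotient P, (pairCount G (Finset.univ.filter (fun u => Quotient.mk P u = c))
        + 6 + 4 * (if ∃ u v : V, u ≠ v ∧ Quotient.mk P u = c ∧ Quotient.mk P v = c
            then 1 else 0))
      ≤ ∑ c : Quotient P, 6 * (Finset.univ.filter (fun u => Quotient.mk P u = c)).card := by
    refine Finset.sum_le_sum fun c _ => ?_
    split_ifs with hc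
    · obtain ⟨u, v, huv, hu, hv⟩ := hc
      have := hb c ?_ ?_
      · omega
      · intro h
        obtain ⟨x, y, hxy⟩ := hP
        have hall : ∀ w, Quotient.mk P w = c := fun w => by
          have := Finset.mem_univ w
          rw [← h] at this
          exact (Finset.mem_filter.1 this).2
        exact hxy (Quotient.exact ((hall x).trans (hall y).symm))
      · exact Finset.one_lt_card.2 ⟨u, by simpa using hu, v, by simpa using hv, huv⟩
    · obtain ⟨w, rfl⟩ := Quotient.exists_rep c
      have : Finset.univ.filter (fun u => Quotient.mk P u = Quotient.mk P w) = {w} := by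
        refine Finset.eq_singleton_iff_unique_mem.2 ⟨by simp, fun z hz => ?_⟩
        by_contra hne
        exact hc ⟨z, w, hne, (Finset.mem_filter.1 hz).2, rfl⟩
      rw [this, pairCount_singleton]
      simp
  have hcs : ∑ c : Quotient P, (Finset.univ.filter (fun u => Quotient.mk P u = c)).card
      = Fintype.card V := by
    simp only [Finset.card_eq_sum_ones]
    rw [sum_fiber]; simp
  rw [← Finset.mul_sum, hcs, Finset.sum_add_distrib, Finset.sum_add_distrib, Finset.sum_const,
    Finset.card_univ, smul_eq_mul, ← Finset.mul_sum, ← Finset.card_filter] at hcl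
  have htot := two_mul_card_edgeSet G
  rw [pairs_split G P] at htot
  have hcross : 2 * (G.edgeFinset.filter (fun e => ∃ u v : V, e = s(u, v) ∧ ¬ P.r u v)).card
      = ∑ u, ∑ v, (if G.Adj u v ∧ Quotient.mk P u ≠ Quotient.mk P v then 1 else 0) := by
    -- the crossing edges form the edge set of a spanning subgraph of `G`
    let G' : SimpleGraph V :=
      { Adj := fun u v => G.Adj u v ∧ Quotient.mk P u ≠ Quotient.mk P v
        symm := ⟨fun u v h => ⟨h.1.symm, h.2.symm⟩⟩
        loopless := ⟨fun u h => h.2 rfl⟩ }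
    have h2 := two_mul_card_edgeSet G'
    refine Eq.trans ?_ (h2.trans (Finset.sum_congr rfl fun u _ => Finset.sum_congr rfl fun v _ => ?_))
    rotate_left
    · by_cases h : G.Adj u v ∧ Quotient.mk P u ≠ Quotient.mk P v
      · rw [if_pos h, if_pos (show G'.Adj u v from h)]
      · rw [if_neg h, if_neg (show ¬ G'.Adj u v from h)]
    congr 1
    refine (Nat.subtype_card _ fun e => ?_).symm
    induction e using Sym2.ind with | _ u v
    rw [Finset.mem_filter, SimpleGraph.mem_edgeFinset, SimpleGraph.mem_edgeSet,
      SimpleGraph.mem_edgeSet]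
    refine and_congr_right fun _ => ?_
    constructor
    · rintro ⟨x, y, hxy, hr⟩ hq
      rcases Sym2.eq_iff.1 hxy with ⟨rfl, rfl⟩ | ⟨rfl, rfl⟩
      · exact hr (Quotient.exact hq)
      · exact hr (Quotient.exact hq.symm)
    · exact fun h => ⟨u, v, rfl, fun hr => h (Quotient.sound hr)⟩
  rw [← hcross] at htot
  omega
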